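/- Let x, y be probability vectors of dimension d and let u_k be the uniform probability vector of dimension k (all entries equal to 1/k). If x⊗u_k ≺ y⊗u_k, then x ≺ y. In other words, a maximally entangled catalyst (uniform Schmidt spectrum) of any dimension cannot enable a transformation between incomparable bipartite pure states. -/

import Mathlib

/-- The sum of the `k` largest entries of a vector (equivalently, for vectors with
nonnegative entries, the maximum of `∑ i ∈ s, x i` over subsets `s` of cardinality at
most `k`; this also accounts for padding with zeros). -/
noncomputable def topSum {ι : Type*} [Fintype ι] [DecidableEq ι] (x : ι → ℝ) (k : ℕ) : ℝ :=
  ((Finset.univ : Finset ι).powerset.filter (fun s => s.card ≤ k)).sup'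
    ⟨∅, by simp⟩ (fun s => ∑ i ∈ s, x i)

/-- A probability vector: nonnegative entries summing to 1. -/
def IsProbVec {ι : Type*} [Fintype ι] (x : ι → ℝ) : Prop :=
  (∀ i, 0 ≤ x i) ∧ ∑ i, x i = 1

/-- `x ≺ y` (majorization, after padding with zeros to a common dimension): every partial
sum of the `k` largest entries of `x` is at most that of `y`, with equal total sums. -/
def PMaj {ι κ : Type*} [Fintype ι] [DecidableEq ι] [Fintype κ] [DecidableEq κ]
    (x : ι → ℝ) (y : κ → ℝ) : Prop :=
  (∀ k : ℕ, topSum x k ≤ topSum y k) ∧ (∑ i, x i = ∑ j, y j)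

/-- Tensor product of two vectors: `(x ⊗ y)_{(i,j)} = x_i y_j`. -/
def pvTensor {ι κ : Type*} (x : ι → ℝ) (y : κ → ℝ) : ι × κ → ℝ :=
  fun p => x p.1 * y p.2

/-- The sum over a set of at most `k` indices is bounded by `topSum x k`. -/
theorem sum_le_topSum {ι : Type*} [Fintype ι] [DecidableEq ι] (x : ι → ℝ) {k : ℕ}
    {s : Finset ι} (hs : s.card ≤ k) : ∑ i ∈ s, x i ≤ topSum x k :=
  Finset.le_sup' (fun s => ∑ i ∈ s, x i) (by simpa using hs)

theorem topSum_le_iff {ι : Type*} [Fintype ι] [DecidableEq ι] (x : ι → ℝ) {k : ℕ} {a : ℝ} :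
    topSum x k ≤ a ↔ ∀ s : Finset ι, s.card ≤ k → ∑ i ∈ s, x i ≤ a := by
  simp [topSum]

/-- A nonnegative vector has a set of at most `m` largest entries, separated from the remaining
entries by a threshold `t`, where `t = 0` unless the set has exactly `m` elements. -/
theorem exists_threshold {ι : Type*} [Fintype ι] [DecidableEq ι] {y : ι → ℝ}
    (hy : ∀ i, 0 ≤ y i) (m : ℕ) :
    ∃ (T : Finset ι) (t : ℝ), 0 ≤ t ∧ T.card ≤ m ∧ (t = 0 ∨ T.card = m) ∧
      (∀ i ∈ T, t ≤ y i) ∧ ∀ i ∉ T, y i ≤ t := by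
  rcases le_total (Fintype.card ι) m with hm | hm
  · exact ⟨Finset.univ, 0, le_rfl, by simpa using hm, Or.inl rfl, fun i _ => hy i, by simp⟩
  rcases Nat.eq_zero_or_pos m with rfl | hpos
  · refine ⟨∅, ∑ i, y i, Finset.sum_nonneg fun i _ => hy i, by simp, by simp, by simp, ?_⟩
    exact fun i _ => Finset.single_le_sum (fun j _ => hy j) (Finset.mem_univ i)
  have hne : (Finset.powersetCard m (Finset.univ : Finset ι)).Nonempty :=
    Finset.powersetCard_nonempty.2 (by simpa using hm)
  obtain ⟨T, hT, hmax⟩ := Finset.exists_max_image _ (fun s => ∑ i ∈ s, y i) hne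
  have hcard : T.card = m := (Finset.mem_powersetCard.1 hT).2
  obtain ⟨a, ha, hmin⟩ := Finset.exists_min_image T y (Finset.card_pos.1 (hcard ▸ hpos))
  refine ⟨T, y a, hy a, hcard.le, Or.inr hcard, hmin, fun j hj => ?_⟩
  have hj' : j ∉ T.erase a := fun h => hj (Finset.mem_of_mem_erase h)
  have hswap := hmax (insert j (T.erase a)) (Finset.mem_powersetCard.2
    ⟨Finset.subset_univ _, by
      rw [Finset.card_insert_of_notMem hj', Finset.card_erase_of_mem ha]; omega⟩)
  rw [Finset.sum_insert hj', ← Finset.add_sum_erase T y ha] at hswap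
  linarith

/-- A weighted sum with weights in `[0, 1]` of total at most `m` is bounded by the sum of the `m`
largest entries. -/
theorem sum_mul_le_topSum {ι : Type*} [Fintype ι] [DecidableEq ι] {y w : ι → ℝ}
    (hy : ∀ i, 0 ≤ y i) (hw0 : ∀ i, 0 ≤ w i) (hw1 : ∀ i, w i ≤ 1) {m : ℕ}
    (hw : ∑ i, w i ≤ m) : ∑ i, w i * y i ≤ topSum y m := by
  obtain ⟨T, t, ht, hcard, hor, hge, hle⟩ := exists_threshold hy m
  refine le_trans ?_ (sum_le_topSum y hcard)
  have htm : t * m = t * T.card := by rcases hor with rfl | h <;> simp [*]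
  have hpt : ∀ i, w i * y i ≤ (if i ∈ T then y i - t else 0) + t * w i := by
    intro i
    split_ifs with hi
    · nlinarith [hge i hi, hw1 i]
    · nlinarith [hle i hi, hw0 i]
  calc ∑ i, w i * y i ≤ ∑ i, ((if i ∈ T then y i - t else 0) + t * w i) :=
        Finset.sum_le_sum fun i _ => hpt i
    _ = ∑ i ∈ T, y i - T.card * t + t * ∑ i, w i := by
        simp [Finset.sum_add_distrib, Finset.mul_sum, Finset.sum_sub_distrib]
    _ ≤ ∑ i ∈ T, y i := by nlinarith [mul_le_mul_of_nonneg_left hw ht]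

theorem topSum_le_topSum_pvTensor_uniform {ι : Type*} [Fintype ι] [DecidableEq ι] {k : ℕ}
    (hk : 0 < k) (x : ι → ℝ) (m : ℕ) :
    topSum x m ≤ topSum (pvTensor x (fun _ : Fin k => 1 / (k : ℝ))) (m * k) := by
  have hk' : (k : ℝ) ≠ 0 := by positivity
  refine (topSum_le_iff x).2 fun s hs => ?_
  have hcard : (s ×ˢ (Finset.univ : Finset (Fin k))).card ≤ m * k := by
    simpa using Nat.mul_le_mul_right k hs
  refine le_of_eq_of_le ?_ (sum_le_topSum _ hcard)
  rw [Finset.sum_product]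
  refine Finset.sum_congr rfl fun i _ => ?_
  simp [pvTensor]
  field_simp

theorem topSum_pvTensor_uniform_le {ι : Type*} [Fintype ι] [DecidableEq ι] {k : ℕ}
    (hk : 0 < k) {y : ι → ℝ} (hy : ∀ i, 0 ≤ y i) (m : ℕ) :
    topSum (pvTensor y (fun _ : Fin k => 1 / (k : ℝ))) (m * k) ≤ topSum y m := by
  have hk' : (0 : ℝ) < k := by positivity
  refine (topSum_le_iff _).2 fun S hS => ?_
  have hfiber : ∀ i, (S.filter fun p => p.1 = i).card ≤ k := by
    intro i
    have hinj : Set.InjOn Prod.snd (S.filter fun p => p.1 = i : Set (ι × Fin k)) := by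
      intro p hp q hq hpq
      simp only [Finset.coe_filter, Set.mem_ofPred_eq] at hp hq
      exact Prod.ext (hp.2.trans hq.2.symm) hpq
    simpa using Finset.card_le_card_of_injOn Prod.snd (fun _ _ => Finset.mem_univ _) hinj
  have hsum : ∑ i, (S.filter fun p => p.1 = i).card = S.card :=
    (Finset.card_eq_sum_card_fiberwise fun _ _ => Finset.mem_coe.2 (Finset.mem_univ _)).symm
  have heq : ∑ p ∈ S, pvTensor y (fun _ : Fin k => 1 / (k : ℝ)) p =
      ∑ i, ((S.filter fun p => p.1 = i).card / (k : ℝ)) * y i := by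
    rw [← Finset.sum_fiberwise S Prod.fst]
    refine Finset.sum_congr rfl fun i _ => ?_
    rw [Finset.sum_congr rfl (g := fun _ => y i * (1 / (k : ℝ)))
      (fun p hp => by simp [pvTensor, (Finset.mem_filter.1 hp).2])]
    rw [Finset.sum_const, nsmul_eq_mul]
    ring
  rw [heq]
  refine sum_mul_le_topSum hy (fun i => by positivity) (fun i => ?_) ?_
  · rw [div_le_one hk']
    exact_mod_cast hfiber i
  · rw [← Finset.sum_div, div_le_iff₀ hk']
    exact_mod_cast hsum.trans_le hS

/-- A maximally entangled catalyst (uniform Schmidt spectrum) of any dimension is useless: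
if `x ⊗ u_k ≺ y ⊗ u_k` for the uniform probability vector `u_k`, then already `x ≺ y`. -/
theorem uniform_catalyst_useless {d k : ℕ} (hk : 0 < k) (x y : Fin d → ℝ)
    (hx : IsProbVec x) (hy : IsProbVec y)
    (h : PMaj (pvTensor x (fun _ : Fin k => 1 / (k : ℝ)))
        (pvTensor y (fun _ : Fin k => 1 / (k : ℝ)))) :
    PMaj x y := by
  refine ⟨fun m => ?_, hx.2.trans hy.2.symm⟩
  exact (topSum_le_topSum_pvTensor_uniform hk x m).trans
    ((h.1 (m * k)).trans (topSum_pvTensor_uniform_le hk hy.1 m))
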